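/- Coupling of well labelled and embedded trees: there exists a joint distribution on pairs (W, U) of a uniform random well labelled tree W with n edges and a uniform random embedded tree U with n edges, such that almost surely the cumulated label distributions satisfy Λ̂_{k-2}(U) ≤ λ̂_k(W) ≤ Λ̂_{k+2}(U) for all k ≥ 1, and in particular |μ(W) - (M(U) - m(U))| ≤ 3, where μ(W) is the maximal label of W and m(U), M(U) are the minimal and maximal labels of U. -/

import Mathlib

open scoped Classical

/-- Rooted plane trees with integer labels on vertices. -/
inductive LTree : Type
  | node : ℤ → List LTree → LTree

namespace LTree

/-- The label of the root. -/
def label : LTree → ℤ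
  | .node v _ => v

mutual
  /-- Number of edges of a labelled plane tree. -/
  def numEdges : LTree → ℕ
    | .node _ ts => numEdgesL ts
  def numEdgesL : List LTree → ℕ
    | [] => 0
    | t :: r => numEdges t + 1 + numEdgesL r
end

mutual
  /-- The labels of two adjacent vertices differ by at most 1. -/
  def Good : LTree → Prop
    | .node v ts => GoodL v ts
  def GoodL : ℤ → List LTree → Prop
    | _, [] => True
    | v, t :: r => |label t - v| ≤ 1 ∧ Good t ∧ GoodL v r
end

mutual
  /-- The multiset of all vertex labels. -/
  def labels : LTree → Multiset ℤ
    | .node v ts => v ::ₘ labelsL ts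
  def labelsL : List LTree → Multiset ℤ
    | [] => 0
    | t :: r => labels t + labelsL r
end

/-- The minimal vertex label. -/
noncomputable def minLabel (T : LTree) : ℤ := sInf {v : ℤ | v ∈ T.labels}

/-- The maximal vertex label. -/
noncomputable def maxLabel (T : LTree) : ℤ := sSup {v : ℤ | v ∈ T.labels}

/-- The number of vertices with label at most `x`. -/
def countLE (T : LTree) (x : ℤ) : ℕ := ((T.labels).filter (fun v => v ≤ x)).card

end LTree

/-- Well labelled trees with `n` edges. -/
def WLTrees (n : ℕ) : Set LTree :=
  {T | T.Good ∧ (∀ v ∈ T.labels, 1 ≤ v) ∧ T.label = 1 ∧ T.numEdges = n}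

/-- Embedded trees (unconstrained well labelled trees) with `n` edges. -/
def EmbTrees (n : ℕ) : Set LTree :=
  {T | T.Good ∧ T.label = 1 ∧ T.numEdges = n}

/-- Blossom trees: binary trees whose inner nodes carry a bud in one of three positions. -/
inductive BT : Type
  | leaf : BT
  | n1 : BT → BT → BT
  | n2 : BT → BT → BT
  | n3 : BT → BT → BT

namespace BT

def size : BT → ℕ
  | leaf => 0
  | n1 l r => size l + size r + 1
  | n2 l r => size l + size r + 1
  | n3 l r => size l + size r + 1

/-- Reroot at the first leaf, the parent edge being replaced by `acc`. -/
def rot : BT → BT → BT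
  | leaf, acc => acc
  | n1 l r, acc => rot l (n3 r acc)
  | n2 l r, acc => rot l (n1 r acc)
  | n3 l r, acc => rot l (n2 r acc)

/-- Reroot at the next leaf. -/
def sig (t : BT) : BT := rot t leaf

theorem size_rot (t acc : BT) : (rot t acc).size = t.size + acc.size := by
  induction t generalizing acc with
  | leaf => simp [rot, size]
  | n1 l r ihl ihr => simp only [rot, ihl, size]; omega
  | n2 l r ihl ihr => simp only [rot, ihl, size]; omega
  | n3 l r ihl ihr => simp only [rot, ihl, size]; omega

theorem size_sig (t : BT) : (sig t).size = t.size := by simp [sig, size_rot, size]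

theorem size_iter (t : BT) (k : ℕ) : (sig^[k] t).size = t.size := by
  induction k with
  | zero => rfl
  | succ k ih => rw [Function.iterate_succ_apply', size_sig, ih]

theorem iter_rot (t acc : BT) : sig^[t.size + 1] (rot t acc) = rot acc t := by
  induction t generalizing acc with
  | leaf => simp [rot, size, sig]
  | n1 l r ihl ihr =>
    have e : (n1 l r).size + 1 = (r.size + 1) + (l.size + 1) := by simp only [size]; omega
    rw [e, Function.iterate_add_apply]
    simp only [rot, ihl, ihr]
  | n2 l r ihl ihr =>
    have e : (n2 l r).size + 1 = (r.size + 1) + (l.size + 1) := by simp only [size]; omega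
    rw [e, Function.iterate_add_apply]
    simp only [rot, ihl, ihr]
  | n3 l r ihl ihr =>
    have e : (n3 l r).size + 1 = (r.size + 1) + (l.size + 1) := by simp only [size]; omega
    rw [e, Function.iterate_add_apply]
    simp only [rot, ihl, ihr]

theorem iter_period (t : BT) : sig^[t.size + 2] t = t := by
  have h := iter_rot t leaf
  rw [show t.size + 2 = (t.size + 1) + 1 from rfl, Function.iterate_succ_apply]
  exact h

/-- Heights at which the leaves are met in the contour. -/
def hts : ℤ → BT → List ℤ
  | v, leaf => [v]
  | v, n1 l r => hts (v + 1) l ++ hts v r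
  | v, n2 l r => hts v l ++ hts v r
  | v, n3 l r => hts v l ++ hts (v - 1) r

theorem length_hts (v : ℤ) (t : BT) : (hts v t).length = t.size + 1 := by
  induction t generalizing v with
  | leaf => simp [hts, size]
  | n1 l r ihl ihr => simp only [hts, List.length_append, ihl, ihr, size]; omega
  | n2 l r ihl ihr => simp only [hts, List.length_append, ihl, ihr, size]; omega
  | n3 l r ihl ihr => simp only [hts, List.length_append, ihl, ihr, size]; omega

theorem hts_shift (v w : ℤ) (t : BT) : hts (v + w) t = (hts v t).map (· + w) := by
  induction t generalizing v with
  | leaf => simp [hts]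
  | n1 l r ihl ihr =>
    simp only [hts, List.map_append, ← ihl, ← ihr]
    rw [show v + w + 1 = v + 1 + w by ring]
  | n2 l r ihl ihr =>
    simp only [hts, List.map_append, ← ihl, ← ihr]
  | n3 l r ihl ihr =>
    simp only [hts, List.map_append, ← ihl, ← ihr]
    rw [show v + w - 1 = v - 1 + w by ring]

theorem hts_rot (t acc : BT) (v w : ℤ) : ∃ x xs, hts v t = x :: xs ∧
    hts w (rot t acc) = (xs ++ hts (v - 1) acc).map (· + (w + 1 - x)) := by
  induction t generalizing acc v w with
  | leaf =>
    refine ⟨v, [], rfl, ?_⟩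
    rw [List.nil_append, ← hts_shift, rot]
    congr 1; ring
  | n1 l r ihl ihr =>
    obtain ⟨x, xs, h1, h2⟩ := ihl (n3 r acc) (v + 1) w
    refine ⟨x, xs ++ hts v r, by simp [hts, h1], ?_⟩
    rw [rot, h2]; simp [hts]
  | n2 l r ihl ihr =>
    obtain ⟨x, xs, h1, h2⟩ := ihl (n1 r acc) v w
    refine ⟨x, xs ++ hts v r, by simp [hts, h1], ?_⟩
    rw [rot, h2]; simp [hts]
  | n3 l r ihl ihr =>
    obtain ⟨x, xs, h1, h2⟩ := ihl (n2 r acc) v w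
    refine ⟨x, xs ++ hts (v - 1) r, by simp [hts, h1], ?_⟩
    rw [rot, h2]; simp [hts]

/-- Extended list of heights (root leaf included). -/
def ext (t : BT) : List ℤ := hts 1 t ++ [0]

theorem length_ext (t : BT) : (ext t).length = t.size + 2 := by simp [ext, length_hts]

theorem ext_sig (t : BT) : ∃ x xs, ext t = x :: xs ∧
    ext (sig t) = (xs ++ [x - 2]).map (· + (2 - x)) := by
  obtain ⟨x, xs, h1, h2⟩ := hts_rot t leaf 1 1
  refine ⟨x, xs ++ [0], by simp [ext, h1], ?_⟩
  rw [ext, sig, h2]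
  simp [hts]

theorem ext_iter (t : BT) (a : List ℤ) (x : ℤ) (b : List ℤ) (h : ext t = a ++ x :: b) :
    ext (sig^[a.length + 1] t) = (b ++ a.map (· - 2) ++ [x - 2]).map (· + (2 - x)) := by
  induction a using List.reverseRecOn generalizing x b with
  | nil =>
    obtain ⟨y, ys, h1, h2⟩ := ext_sig t
    rw [h1] at h
    simp only [List.nil_append, List.cons.injEq] at h
    obtain ⟨rfl, rfl⟩ := h
    simpa using h2
  | append_singleton a z ih =>
    have h' := ih z (x :: b) (by simp [h])
    rw [List.length_append, List.length_singleton, Function.iterate_succ_apply']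
    obtain ⟨y, ys, h1, h2⟩ := ext_sig (sig^[a.length + 1] t)
    rw [h2]
    rw [h1] at h'
    simp only [List.cons_append, List.map_cons, List.cons.injEq] at h'
    obtain ⟨rfl, rfl⟩ := h'
    simp only [List.map_append, List.map_map, List.append_assoc, List.map_cons, List.map_nil,
      List.cons_append, List.nil_append]
    congr 1
    · apply List.map_congr_left; intro c _; simp; ring
    congr 1
    · apply List.map_congr_left; intro c _; simp; ring
    simp; ring

theorem mem_hts (v : ℤ) (t : BT) : v ∈ hts v t := by
  induction t generalizing v with
  | leaf => simp [hts]
  | n1 l r ihl ihr => simp [hts, ihr]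
  | n2 l r ihl ihr => simp [hts, ihr]
  | n3 l r ihl ihr => simp [hts, ihl]

theorem app_split {α : Type*} {p q a b : List α} {x : α} (h : p ++ q = a ++ x :: b) :
    (∃ c, p = a ++ x :: c) ∨ (∃ a', a = p ++ a' ∧ q = a' ++ x :: b) := by
  rcases List.append_eq_append_iff.1 h with ⟨a', h1, h2⟩ | ⟨c, h1, h2⟩
  · exact Or.inr ⟨a', h1, h2⟩
  · cases c with
    | nil => exact Or.inr ⟨[], by simpa using h1.symm, by simpa using h2.symm⟩
    | cons y c =>
      simp only [List.cons_append, List.cons.injEq] at h2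
      exact Or.inl ⟨c, by rw [h1, h2.1]⟩

theorem hts_skip (t : BT) (v : ℤ) (a b : List ℤ) (x y : ℤ) (h : hts v t = a ++ x :: b)
    (h1 : x < y) (h2 : y ≤ v) : y ∈ a := by
  induction t generalizing v a b with
  | leaf =>
    cases a with
    | nil => simp [hts] at h; omega
    | cons z a => simp [hts] at h
  | n1 l r ihl ihr =>
    rcases app_split h with ⟨c, hc⟩ | ⟨a', rfl, hc⟩
    · exact ihl _ _ _ hc (by omega)
    · exact List.mem_append_right _ (ihr _ _ _ hc h2)
  | n2 l r ihl ihr =>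
    rcases app_split h with ⟨c, hc⟩ | ⟨a', rfl, hc⟩
    · exact ihl _ _ _ hc (by omega)
    · exact List.mem_append_right _ (ihr _ _ _ hc h2)
  | n3 l r ihl ihr =>
    rcases app_split h with ⟨c, hc⟩ | ⟨a', rfl, hc⟩
    · exact ihl _ _ _ hc (by omega)
    · by_cases hy : y = v
      · subst hy; exact List.mem_append_left _ (mem_hts _ _)
      · exact List.mem_append_right _ (ihr _ _ _ hc (by omega))

theorem ext_skip (t : BT) (a b : List ℤ) (x y : ℤ) (h : ext t = a ++ x :: b)
    (h1 : x < y) (h2 : y ≤ 1) : y ∈ a := by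
  rcases app_split h with ⟨c, hc⟩ | ⟨a', rfl, hc⟩
  · exact hts_skip _ _ _ _ _ _ hc h1 h2
  · cases a' with
    | nil =>
      simp at hc
      have : y = 1 := by omega
      subst this
      simpa using mem_hts 1 t
    | cons z a => simp at hc

/-- The plane forest with labels. -/
def forest : ℤ → BT → List LTree
  | _, leaf => []
  | v, n1 l r => .node (v + 1) (forest (v + 1) l) :: forest v r
  | v, n2 l r => .node v (forest v l) :: forest v r
  | v, n3 l r => .node (v - 1) (forest (v - 1) r) :: forest v l

def tree (t : BT) : LTree := .node 1 (forest 1 t)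

theorem forest_good (v : ℤ) (t : BT) : LTree.GoodL v (forest v t) := by
  induction t generalizing v with
  | leaf => simp [forest, LTree.GoodL]
  | n1 l r ihl ihr => simp [forest, LTree.GoodL, LTree.Good, LTree.label, ihl, ihr]
  | n2 l r ihl ihr => simp [forest, LTree.GoodL, LTree.Good, LTree.label, ihl, ihr]
  | n3 l r ihl ihr => simp [forest, LTree.GoodL, LTree.Good, LTree.label, ihl, ihr]

theorem forest_edges (v : ℤ) (t : BT) : LTree.numEdgesL (forest v t) = t.size := by
  induction t generalizing v with
  | leaf => simp [forest, LTree.numEdgesL, size]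
  | n1 l r ihl ihr => simp only [forest, LTree.numEdgesL, LTree.numEdges, size, ihl, ihr]; omega
  | n2 l r ihl ihr => simp only [forest, LTree.numEdgesL, LTree.numEdges, size, ihl, ihr]; omega
  | n3 l r ihl ihr => simp only [forest, LTree.numEdgesL, LTree.numEdges, size, ihl, ihr]; omega

theorem forest_labels (v : ℤ) (t : BT) :
    v ::ₘ LTree.labelsL (forest v t) = (hts v t : Multiset ℤ) := by
  induction t generalizing v with
  | leaf => simp [forest, LTree.labelsL, hts]
  | n1 l r ihl ihr =>
    simp only [forest, LTree.labelsL, LTree.labels, hts, ← Multiset.coe_add, ← ihl, ← ihr,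
      ← Multiset.singleton_add]; abel
  | n2 l r ihl ihr =>
    simp only [forest, LTree.labelsL, LTree.labels, hts, ← Multiset.coe_add, ← ihl, ← ihr,
      ← Multiset.singleton_add]; abel
  | n3 l r ihl ihr =>
    simp only [forest, LTree.labelsL, LTree.labels, hts, ← Multiset.coe_add, ← ihl, ← ihr,
      ← Multiset.singleton_add]; abel

theorem labels_tree (t : BT) : (tree t).labels = (hts 1 t : Multiset ℤ) := by
  rw [tree, LTree.labels, forest_labels]

theorem forest_inj (v : ℤ) (t s : BT) (h : forest v t = forest v s) : t = s := by
  induction t generalizing v s with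
  | leaf => cases s <;> simp [forest] at h ⊢
  | n1 l r ihl ihr =>
    cases s <;> simp [forest] at h
    · rw [ihl _ _ h.1, ihr _ _ h.2]
    · omega
  | n2 l r ihl ihr =>
    cases s <;> simp [forest] at h
    · rw [ihl _ _ h.1, ihr _ _ h.2]
    · omega
  | n3 l r ihl ihr =>
    cases s <;> simp [forest] at h
    · omega
    · rw [ihl _ _ h.2, ihr _ _ h.1]

theorem forest_surj (n : ℕ) : ∀ (v : ℤ) (ts : List LTree), LTree.numEdgesL ts ≤ n →
    LTree.GoodL v ts → ∃ t, forest v t = ts := by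
  induction n with
  | zero =>
    intro v ts h _
    cases ts with
    | nil => exact ⟨leaf, rfl⟩
    | cons t r => simp [LTree.numEdgesL] at h
  | succ n ih =>
    intro v ts h hg
    cases ts with
    | nil => exact ⟨leaf, rfl⟩
    | cons t r =>
      obtain ⟨w, us⟩ := t
      simp only [LTree.numEdgesL, LTree.numEdges, LTree.GoodL, LTree.Good, LTree.label] at h hg
      obtain ⟨h1, h2, h3⟩ := hg
      obtain ⟨p, hp⟩ := ih w us (by omega) h2
      obtain ⟨q, hq⟩ := ih v r (by omega) h3
      rw [abs_le] at h1
      have : w = v + 1 ∨ w = v ∨ w = v - 1 := by omega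
      rcases this with rfl | rfl | rfl
      · exact ⟨n1 p q, by simp [forest, hp, hq]⟩
      · exact ⟨n2 p q, by simp [forest, hp, hq]⟩
      · exact ⟨n3 q p, by simp [forest, hp, hq]⟩

theorem tree_inj {t s : BT} (h : tree t = tree s) : t = s := by
  simp only [tree, LTree.node.injEq, true_and] at h
  exact forest_inj _ _ _ h

theorem tree_mem (t : BT) : tree t ∈ EmbTrees t.size :=
  ⟨by simpa [tree, LTree.Good] using forest_good 1 t, rfl,
    by simpa [tree, LTree.numEdges] using forest_edges 1 t⟩

theorem tree_surj {n : ℕ} {U : LTree} (h : U ∈ EmbTrees n) : ∃ t, t.size = n ∧ tree t = U := by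
  obtain ⟨v, ts⟩ := U
  obtain ⟨h1, h2, h3⟩ := h
  simp only [LTree.label] at h2
  subst h2
  simp only [LTree.Good, LTree.numEdges] at h1 h3
  obtain ⟨t, ht⟩ := forest_surj n 1 ts h3.le h1
  exact ⟨t, by rw [← h3, ← ht, forest_edges], by rw [tree, ht]⟩

/-- Balanced blossom trees. -/
def Bal (t : BT) : Prop := ∀ v ∈ hts 1 t, 1 ≤ v

theorem tree_mem_WL {n : ℕ} (t : BT) (hn : t.size = n) : tree t ∈ WLTrees n ↔ Bal t := by
  have h := tree_mem t
  rw [hn] at h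
  constructor
  · intro hw v hv
    exact hw.2.1 v (by rw [labels_tree]; exact hv)
  · intro hb
    exact ⟨h.1, fun v hv => hb v (by rw [labels_tree] at hv; exact hv), h.2⟩

theorem hts_iter (t : BT) (a : List ℤ) (x : ℤ) (b : List ℤ) (h : ext t = a ++ x :: b) :
    hts 1 (sig^[a.length + 1] t) = b.map (· + (2 - x)) ++ a.map (· - x) := by
  have := ext_iter t a x b h
  rw [ext, List.map_append] at this
  have h2 := List.append_inj_left' this (by simp)
  rw [h2, List.map_append, List.map_map]
  congr 1
  apply List.map_congr_left; intro c _; simp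

theorem bal_iter (t : BT) (a : List ℤ) (x : ℤ) (b : List ℤ) (h : ext t = a ++ x :: b) :
    Bal (sig^[a.length + 1] t) ↔ (∀ y ∈ a, x + 1 ≤ y) ∧ (∀ y ∈ b, x - 1 ≤ y) := by
  rw [Bal, hts_iter t a x b h]
  simp only [List.mem_append, List.mem_map]
  constructor
  · intro H
    refine ⟨fun y hy => ?_, fun y hy => ?_⟩
    · have := H _ (Or.inr ⟨y, hy, rfl⟩); omega
    · have := H _ (Or.inl ⟨y, hy, rfl⟩); omega
  · rintro ⟨H1, H2⟩ v (⟨y, hy, rfl⟩ | ⟨y, hy, rfl⟩)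
    · have := H2 y hy; omega
    · have := H1 y hy; omega

/-- Abstract cycle lemma. -/
theorem cycle_card (N : ℕ) (g : ℕ → ℤ) (h0 : ∃ j < N, g j ≤ 0)
    (sf : ∀ j < N, ∀ y, g j < y → y ≤ 1 → ∃ i < j, g i = y) :
    ((Finset.range N).filter (fun j => (∀ i < j, g j + 1 ≤ g i) ∧
      (∀ i < N, j < i → g j - 1 ≤ g i))).card = 2 := by
  obtain ⟨jz, hjz, hz⟩ := h0
  obtain ⟨jm, hjm, hmin⟩ := (Finset.range N).exists_min_image g ⟨jz, by simpa using hjz⟩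
  simp only [Finset.mem_range] at hjm hmin
  have hm0 : g jm ≤ 0 := (hmin jz hjz).trans hz
  have e0 : ∃ j, j < N ∧ g j = g jm := ⟨jm, hjm, rfl⟩
  have e1 : ∃ j, j < N ∧ g j = g jm + 1 := by
    obtain ⟨i, hi, h⟩ := sf jm hjm (g jm + 1) (by omega) (by omega)
    exact ⟨i, by omega, h⟩
  obtain ⟨j0, ⟨h0N, h0⟩, h0f⟩ : ∃ j, (j < N ∧ g j = g jm) ∧ ∀ i < j, g i ≠ g jm :=
    ⟨Nat.find e0, Nat.find_spec e0, fun i hi h =>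
      Nat.find_min e0 hi ⟨hi.trans (Nat.find_spec e0).1, h⟩⟩
  obtain ⟨j1, ⟨h1N, h1⟩, h1f⟩ : ∃ j, (j < N ∧ g j = g jm + 1) ∧ ∀ i < j, g i ≠ g jm + 1 :=
    ⟨Nat.find e1, Nat.find_spec e1, fun i hi h =>
      Nat.find_min e1 hi ⟨hi.trans (Nat.find_spec e1).1, h⟩⟩
  generalize g jm = m at *
  have hne : j0 ≠ j1 := by rintro rfl; omega
  rw [← Finset.card_pair hne]
  congr 1
  ext j
  simp only [Finset.mem_filter, Finset.mem_range, Finset.mem_insert, Finset.mem_singleton]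
  constructor
  · rintro ⟨hj, ha, hb⟩
    have hjm := hmin j hj
    have hle : g j ≤ m + 1 := by
      rcases lt_trichotomy j0 j with h | h | h
      · have := ha j0 h; omega
      · subst h; omega
      · have := hb j0 h0N h; omega
    have : g j = m ∨ g j = m + 1 := by omega
    rcases this with h | h
    · left
      rcases lt_trichotomy j0 j with h' | h' | h'
      · have := ha j0 h'; omega
      · exact h'.symm
      · exact absurd h (h0f j h')
    · right
      rcases lt_trichotomy j1 j with h' | h' | h'
      · have := ha j1 h'; omega
      · exact h'.symm
      · exact absurd h (h1f j h')
  · rintro (rfl | rfl)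
    · refine ⟨h0N, fun i hi => ?_, fun i hi _ => ?_⟩
      · have := hmin i (by omega)
        have := h0f i hi
        omega
      · have := hmin i hi; omega
    · refine ⟨h1N, fun i hi => ?_, fun i hi _ => ?_⟩
      · have h2 := hmin i (by omega)
        have h3 := h1f i hi
        have h4 : g i ≠ m := by
          intro h
          obtain ⟨i', hi', h'⟩ := sf i (by omega) (m + 1) (by omega) (by omega)
          exact h1f i' (by omega) h'
        omega
      · have := hmin i hi; omega

theorem ext_decomp (t : BT) (j : ℕ) (hj : j < t.size + 2) :
    ∃ a x b, ext t = a ++ x :: b ∧ a.length = j := by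
  have hl : j < (ext t).length := by rw [length_ext]; exact hj
  refine ⟨(ext t).take j, (ext t)[j], (ext t).drop (j + 1), ?_, by simp; omega⟩
  simp

theorem bal_card (t : BT) :
    ((Finset.range (t.size + 2)).filter (fun j => Bal (sig^[j + 1] t))).card = 2 := by
  have key := cycle_card (t.size + 2) (fun j => (ext t).getD j 0)
    ⟨t.size + 1, by omega, by simp [ext, List.getD, length_hts]⟩ ?_
  · refine Eq.trans (congrArg Finset.card ?_) key
    apply Finset.filter_congr
    intro j hj
    obtain ⟨a, x, b, h, rfl⟩ := ext_decomp t j (by simpa using hj)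
    have hlen : t.size + 2 = a.length + (b.length + 1) := by rw [← length_ext, h]; simp
    rw [bal_iter t a x b h, h, hlen]
    apply and_congr
    · constructor
      · intro H i hi
        have := H a[i] (List.getElem_mem _)
        simpa [List.getD, List.getElem?_append_left hi, hi] using this
      · intro H y hy
        obtain ⟨i, hi, rfl⟩ := List.mem_iff_getElem.1 hy
        have := H i hi
        simpa [List.getD, List.getElem?_append_left hi, hi] using this
    · constructor
      · intro H i hi hi'
        obtain ⟨k, rfl⟩ : ∃ k, i = a.length + (k + 1) := ⟨i - a.length - 1, by omega⟩
        have hk : k < b.length := by omega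
        have := H b[k] (List.getElem_mem _)
        simpa [List.getD, List.getElem?_append_right, hk] using this
      · intro H y hy
        obtain ⟨k, hk, rfl⟩ := List.mem_iff_getElem.1 hy
        have := H (a.length + (k + 1)) (by omega) (by omega)
        simpa [List.getD, List.getElem?_append_right, hk] using this
  · intro j hj y h1 h2
    obtain ⟨a, x, b, h, rfl⟩ := ext_decomp t j hj
    simp only [h] at h1 ⊢
    have hy := ext_skip t a b x y h (by simpa [List.getD] using h1) h2
    obtain ⟨i, hi, rfl⟩ := List.mem_iff_getElem.1 hy
    exact ⟨i, hi, by simp [List.getD, List.getElem?_append_left hi, hi]⟩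

/-- All blossom trees of height at most k. -/
noncomputable def upTo : ℕ → Finset BT
  | 0 => {leaf}
  | k + 1 => {leaf} ∪ ((upTo k ×ˢ upTo k).image fun p => n1 p.1 p.2) ∪
      ((upTo k ×ˢ upTo k).image fun p => n2 p.1 p.2) ∪
      ((upTo k ×ˢ upTo k).image fun p => n3 p.1 p.2)

theorem mem_upTo (k : ℕ) (t : BT) (h : t.size ≤ k) : t ∈ upTo k := by
  induction k generalizing t with
  | zero => cases t <;> simp [size, upTo] at h ⊢
  | succ k ih =>
    cases t with
    | leaf => simp [upTo]
    | n1 l r => simp only [size] at h; simp [upTo, ih l (by omega), ih r (by omega)]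
    | n2 l r => simp only [size] at h; simp [upTo, ih l (by omega), ih r (by omega)]
    | n3 l r => simp only [size] at h; simp [upTo, ih l (by omega), ih r (by omega)]

noncomputable def all (n : ℕ) : Finset BT := (upTo n).filter (fun t => t.size = n)

theorem mem_all {n : ℕ} {t : BT} : t ∈ all n ↔ t.size = n := by
  simp only [all, Finset.mem_filter, and_iff_right_iff_imp]
  intro h; exact mem_upTo n t h.le

theorem emb_ncard (n : ℕ) : (EmbTrees n).ncard = (all n).card := by
  rw [← Finset.card_image_of_injOn (f := tree) (fun _ _ _ _ h => tree_inj h),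
    ← Set.ncard_coe_finset]
  congr 1
  ext U
  simp only [Finset.coe_image, Set.mem_image, Finset.mem_coe, mem_all]
  constructor
  · exact fun h => tree_surj h
  · rintro ⟨t, rfl, rfl⟩; exact tree_mem t

theorem wl_surj {n : ℕ} {W : LTree} (h : W ∈ WLTrees n) :
    ∃ t, t.size = n ∧ Bal t ∧ tree t = W := by
  obtain ⟨t, h1, rfl⟩ := tree_surj (n := n) (U := W) ⟨h.1, h.2.2⟩
  exact ⟨t, h1, (tree_mem_WL t h1).1 h, rfl⟩

theorem wl_ncard (n : ℕ) : (WLTrees n).ncard = ((all n).filter Bal).card := by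
  rw [← Finset.card_image_of_injOn (f := tree) (fun _ _ _ _ h => tree_inj h),
    ← Set.ncard_coe_finset]
  congr 1
  ext U
  simp only [Finset.coe_image, Set.mem_image, Finset.mem_coe, mem_all, Finset.mem_filter]
  constructor
  · intro h
    obtain ⟨t, h1, h2, h3⟩ := wl_surj h
    exact ⟨t, ⟨h1, h2⟩, h3⟩
  · rintro ⟨t, ⟨h1, h2⟩, rfl⟩; exact (tree_mem_WL t h1).2 h2

/-- The probability space of the coupling: rooted trees with a marked good rerooting. -/
noncomputable def Om (n : ℕ) : Finset (BT × ℕ) :=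
  (all n ×ˢ Finset.range (n + 2)).filter (fun q => Bal (sig^[q.2 + 1] q.1))

theorem mem_Om {n : ℕ} {q : BT × ℕ} :
    q ∈ Om n ↔ (q.1.size = n ∧ q.2 < n + 2) ∧ Bal (sig^[q.2 + 1] q.1) := by
  simp only [Om, Finset.mem_filter, Finset.mem_product, mem_all, Finset.mem_range]

theorem Om_fiber_right (n : ℕ) (t : BT) (ht : t.size = n) :
    ((Om n).filter (fun q => q.1 = t)).card = 2 := by
  rw [← bal_card t]
  apply Finset.card_nbij' (fun q => q.2) (fun j => (t, j))
  · rintro ⟨s, j⟩ h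
    rw [Finset.mem_coe, Finset.mem_filter, mem_Om] at h
    rw [Finset.mem_coe, Finset.mem_filter, Finset.mem_range]
    obtain ⟨⟨⟨h1, h2⟩, h3⟩, rfl⟩ := h
    exact ⟨by simp only at h1 h2 ⊢; omega, h3⟩
  · rintro j h
    rw [Finset.mem_coe, Finset.mem_filter, Finset.mem_range] at h
    rw [Finset.mem_coe, Finset.mem_filter, mem_Om]
    exact ⟨⟨⟨ht, by simp only; omega⟩, h.2⟩, rfl⟩
  · rintro ⟨s, j⟩ h
    rw [Finset.mem_coe, Finset.mem_filter] at h
    exact Prod.ext h.2.symm rfl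
  · intro j _; rfl

theorem Om_fiber_left (n : ℕ) (t : BT) (ht : t.size = n) (hb : Bal t) :
    ((Om n).filter (fun q => sig^[q.2 + 1] q.1 = t)).card = n + 2 := by
  rw [← Finset.card_range (n + 2)]
  apply Finset.card_nbij' (fun q => q.2) (fun j => (sig^[n + 1 - j] t, j))
  · rintro ⟨s, j⟩ h
    rw [Finset.mem_coe, Finset.mem_filter, mem_Om] at h
    rw [Finset.mem_coe, Finset.mem_range]
    exact h.1.1.2
  · rintro j h
    have hj : j < n + 2 := by simpa using h
    have e : sig^[j + 1] (sig^[n + 1 - j] t) = t := by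
      rw [← Function.iterate_add_apply, show j + 1 + (n + 1 - j) = t.size + 2 by omega,
        iter_period]
    simp only [Finset.coe_filter, Set.mem_ofPred_eq, Om, Finset.mem_filter, Finset.mem_product,
      mem_all, size_iter, Finset.mem_range]
    rw [e]
    exact ⟨⟨⟨ht, hj⟩, hb⟩, rfl⟩
  · rintro ⟨s, j⟩ h
    simp only [Finset.coe_filter, Set.mem_ofPred_eq, Om, Finset.mem_filter, Finset.mem_product,
      mem_all, size_iter, Finset.mem_range] at h
    obtain ⟨⟨⟨h1, h2⟩, h3⟩, rfl⟩ := h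
    simp only [Prod.mk.injEq, and_true]
    rw [← Function.iterate_add_apply, show n + 1 - j + (j + 1) = s.size + 2 by omega,
        iter_period]
  · intro j _; rfl

theorem Om_card (n : ℕ) : (Om n).card = 2 * (all n).card := by
  rw [Finset.card_eq_sum_card_fiberwise (f := fun q => q.1) (t := all n)]
  · rw [Finset.sum_congr rfl (fun t ht => Om_fiber_right n t (mem_all.1 ht))]
    simp [mul_comm]
  · intro q hq
    rw [Finset.mem_coe, mem_Om] at hq
    rw [Finset.mem_coe, mem_all]
    exact hq.1.1

theorem Om_card' (n : ℕ) : (Om n).card = (n + 2) * ((all n).filter Bal).card := by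
  rw [Finset.card_eq_sum_card_fiberwise (f := fun q => sig^[q.2 + 1] q.1)
    (t := (all n).filter Bal)]
  · rw [Finset.sum_congr rfl (g := fun _ => n + 2) (fun t ht => by
      simp only [Finset.mem_filter, mem_all] at ht
      exact Om_fiber_left n t ht.1 ht.2)]
    simp [mul_comm]
  · intro q hq
    simp only [Om, Finset.coe_filter, Set.mem_ofPred_eq, Finset.mem_product, mem_all,
      size_iter] at hq ⊢
    exact ⟨hq.1.1, hq.2⟩

theorem all_pos (n : ℕ) : 0 < (all n).card := by
  have : ∃ t : BT, t.size = n := by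
    induction n with
    | zero => exact ⟨leaf, rfl⟩
    | succ n ih => obtain ⟨t, ht⟩ := ih; exact ⟨n1 leaf t, by simp [size, ht]⟩
  obtain ⟨t, ht⟩ := this
  exact Finset.card_pos.2 ⟨t, mem_all.2 ht⟩

/-- Number of entries at most `y`. -/
noncomputable def cnt (l : List ℤ) (y : ℤ) : ℕ := l.countP (fun v => decide (v ≤ y))

theorem countLE_tree (t : BT) (y : ℤ) : (tree t).countLE y = cnt (hts 1 t) y := by
  rw [LTree.countLE, labels_tree, cnt, ← Multiset.countP_eq_card_filter, Multiset.coe_countP]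

theorem cnt_mono (l : List ℤ) {y z : ℤ} (h : y ≤ z) : cnt l y ≤ cnt l z := by
  apply List.countP_mono_left
  intro x _ hx
  simp at hx ⊢; omega

theorem cnt_append (l r : List ℤ) (y : ℤ) : cnt (l ++ r) y = cnt l y + cnt r y := by
  simp [cnt]

theorem cnt_shift (l : List ℤ) (c y : ℤ) : cnt (l.map (· + c)) y = cnt l (y - c) := by
  rw [cnt, cnt, List.countP_map]
  congr 1
  funext v
  simp [le_sub_iff_add_le]

theorem cnt_lt (l : List ℤ) {y z v : ℤ} (h : y < v) (h' : v ≤ z) (hv : v ∈ l) :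
    cnt l y + 1 ≤ cnt l z := by
  induction l with
  | nil => simp at hv
  | cons x l ih =>
    have h1 : cnt l y ≤ cnt l z := cnt_mono l (by omega)
    simp only [cnt, List.countP_cons] at h1 ih ⊢
    rcases List.mem_cons.1 hv with rfl | hv
    · have e1 : ¬ v ≤ y := by omega
      simp [e1, h']; omega
    · have := ih hv
      by_cases e1 : x ≤ y
      · have e2 : x ≤ z := by omega
        simp [e1, e2]; omega
      · simp [e1]; split_ifs <;> omega

theorem minLabel_spec (t : BT) : (tree t).minLabel ∈ hts 1 t ∧
    ∀ v ∈ hts 1 t, (tree t).minLabel ≤ v := by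
  have hs : {v : ℤ | v ∈ (tree t).labels} = {v : ℤ | v ∈ hts 1 t} := by
    ext v; simp [labels_tree]
  have hf : Set.Finite {v : ℤ | v ∈ hts 1 t} := List.finite_toSet _
  rw [LTree.minLabel, hs]
  exact ⟨Int.csInf_mem ⟨1, mem_hts 1 t⟩ hf.bddBelow, fun v hv => csInf_le hf.bddBelow hv⟩

theorem maxLabel_spec (t : BT) : (tree t).maxLabel ∈ hts 1 t ∧
    ∀ v ∈ hts 1 t, v ≤ (tree t).maxLabel := by
  have hs : {v : ℤ | v ∈ (tree t).labels} = {v : ℤ | v ∈ hts 1 t} := by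
    ext v; simp [labels_tree]
  have hf : Set.Finite {v : ℤ | v ∈ hts 1 t} := List.finite_toSet _
  rw [LTree.maxLabel, hs]
  exact ⟨Int.csSup_mem ⟨1, mem_hts 1 t⟩ hf.bddAbove, fun v hv => le_csSup hf.bddAbove hv⟩

theorem count_bounds (t : BT) (j : ℕ) (hj : j < t.size + 2) (hb : Bal (sig^[j + 1] t))
    (k : ℤ) (hk : 1 ≤ k) :
    cnt (hts 1 t) ((tree t).minLabel + (k - 2) - 1) ≤ cnt (hts 1 (sig^[j + 1] t)) k ∧
    cnt (hts 1 (sig^[j + 1] t)) k ≤ cnt (hts 1 t) ((tree t).minLabel + (k + 2) - 1) := by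
  obtain ⟨hm1, hm2⟩ := minLabel_spec t
  generalize (tree t).minLabel = m at *
  obtain ⟨a, x, b, h, rfl⟩ := ext_decomp t j hj
  rw [bal_iter t a x b h] at hb
  obtain ⟨hb1, hb2⟩ := hb
  have hh := hts_iter t a x b h
  rw [hh]
  rcases List.eq_nil_or_concat b with rfl | ⟨b', z, rfl⟩
  · have h' : hts 1 t ++ [0] = a ++ [x] := h
    have e1 := List.append_inj_left' h' rfl
    have e2 := List.append_inj_right' h' rfl
    simp only [List.cons.injEq, and_true] at e2
    subst e2
    have : 1 ≤ m := by have := hb1 m (e1 ▸ hm1); omega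
    have : m ≤ 1 := hm2 1 (mem_hts 1 t)
    simp only [List.map_nil, List.nil_append, sub_zero, List.map_id', e1]
    exact ⟨cnt_mono _ (by omega), cnt_mono _ (by omega)⟩
  · have h' : hts 1 t ++ [0] = (a ++ x :: b') ++ [z] := by
      rw [show hts 1 t ++ [0] = ext t from rfl, h]; simp
    have e1 := List.append_inj_left' h' rfl
    have e2 := List.append_inj_right' h' rfl
    simp only [List.cons.injEq, and_true] at e2
    subst e2
    have hmx : m ≤ x := hm2 x (by rw [e1]; simp)
    have hx1 : x - 1 ≤ 0 := hb2 0 (by simp)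
    have hxm : x - 1 ≤ m := by
      rw [e1] at hm1
      rcases List.mem_append.1 hm1 with h | h
      · have := hb1 _ h; omega
      · rcases List.mem_cons.1 h with h | h
        · omega
        · exact hb2 m (by simp [h])
    have hcons : ∀ y, cnt (x :: b') y = cnt b' y + if x ≤ y then 1 else 0 := by
      intro y; simp [cnt, List.countP_cons]
    have hsing : ∀ y, cnt [(0 : ℤ)] y = if 0 ≤ y then 1 else 0 := by
      intro y; simp [cnt, List.countP_cons]
    have hsub : a.map (fun v => v - x) = a.map (· + (-x)) := by
      apply List.map_congr_left; intro c _; ring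
    rw [hsub, e1, cnt_append, cnt_append, cnt_shift, cnt_shift, cnt_append, hcons, hcons,
      List.concat_eq_append, cnt_append, hsing]
    constructor
    · have i1 : cnt b' (m + (k - 2) - 1) ≤ cnt b' (k - (2 - x)) := cnt_mono _ (by omega)
      have i2 : cnt a (m + (k - 2) - 1) ≤ cnt a (k - -x) := cnt_mono _ (by omega)
      by_cases c : 0 ≤ k - (2 - x)
      · rw [if_pos c]
        split_ifs <;> omega
      · have i3 : cnt a (m + (k - 2) - 1) + 1 ≤ cnt a (k - -x) :=
          cnt_lt a (v := x + k) (by omega) (by omega)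
            (ext_skip t a _ x (x + k) h (by omega) (by omega))
        split_ifs <;> omega
    · have i1 : cnt b' (k - (2 - x)) ≤ cnt b' (m + (k + 2) - 1) := cnt_mono _ (by omega)
      have i2 : cnt a (k - -x) ≤ cnt a (m + (k + 2) - 1) := cnt_mono _ (by omega)
      rw [if_pos (show x ≤ m + (k + 2) - 1 by omega)]
      split_ifs <;> omega

theorem cnt_full {l : List ℤ} {y : ℤ} : cnt l y = l.length ↔ ∀ v ∈ l, v ≤ y := by
  simp [cnt, List.countP_eq_length]

theorem max_bound (t s : BT) (hs : s.size = t.size) (hb : Bal s)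
    (H : ∀ k : ℤ, 1 ≤ k → cnt (hts 1 t) ((tree t).minLabel + (k - 2) - 1) ≤ cnt (hts 1 s) k ∧
      cnt (hts 1 s) k ≤ cnt (hts 1 t) ((tree t).minLabel + (k + 2) - 1)) :
    |(tree s).maxLabel - ((tree t).maxLabel - (tree t).minLabel)| ≤ 3 := by
  obtain ⟨hm1, hm2⟩ := minLabel_spec t
  obtain ⟨hM1, hM2⟩ := maxLabel_spec t
  obtain ⟨hu1, hu2⟩ := maxLabel_spec s
  have hlen : (hts 1 s).length = (hts 1 t).length := by simp [length_hts, hs]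
  have hmM := hm2 _ hM1
  have hu := hb _ hu1
  rw [abs_le]
  constructor
  · have h1 := (H _ hu).2
    rw [cnt_full.2 hu2] at h1
    have h2 : cnt (hts 1 t) ((tree t).minLabel + ((tree s).maxLabel + 2) - 1)
        = (hts 1 t).length := le_antisymm (List.countP_le_length) (hlen ▸ h1)
    have := cnt_full.1 h2 _ hM1
    omega
  · have h1 := (H ((tree t).maxLabel - (tree t).minLabel + 3) (by omega)).1
    rw [cnt_full.2 (fun v hv => by have := hM2 v hv; omega)] at h1
    have h2 : cnt (hts 1 s) ((tree t).maxLabel - (tree t).minLabel + 3)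
        = (hts 1 s).length := le_antisymm (List.countP_le_length) (hlen ▸ h1)
    have := cnt_full.1 h2 _ hu1
    omega

end BT

/-- Coupling of well labelled and embedded trees: there is a joint distribution
on pairs `(W, U)` whose marginals are uniform on well labelled trees and on
embedded trees with `n` edges, such that on its support the cumulated label
distributions satisfy `Λ̂_{k-2}(U) ≤ λ̂_k(W) ≤ Λ̂_{k+2}(U)` for all `k ≥ 1`
(where `Λ̂_j(U)` counts labels at most `minLabel U + j - 1` and `λ̂_k(W)` counts
labels at most `k`), and in particular `|μ(W) - (M(U) - m(U))| ≤ 3`. -/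
theorem coupling_wellLabelled_embedded (n : ℕ) :
    ∃ (S : Finset (LTree × LTree)) (p : LTree × LTree → ℚ),
      (∀ x ∈ S, 0 < p x) ∧ (∑ x ∈ S, p x = 1) ∧
      (∀ x ∈ S, x.1 ∈ WLTrees n ∧ x.2 ∈ EmbTrees n) ∧
      (∀ W ∈ WLTrees n,
        ∑ x ∈ S.filter (fun x => x.1 = W), p x = ((WLTrees n).ncard : ℚ)⁻¹) ∧
      (∀ U ∈ EmbTrees n,
        ∑ x ∈ S.filter (fun x => x.2 = U), p x = ((EmbTrees n).ncard : ℚ)⁻¹) ∧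
      ∀ x ∈ S,
        (∀ k : ℕ, 1 ≤ k →
          x.2.countLE (x.2.minLabel + ((k : ℤ) - 2) - 1) ≤ x.1.countLE (k : ℤ) ∧
            x.1.countLE (k : ℤ) ≤ x.2.countLE (x.2.minLabel + ((k : ℤ) + 2) - 1)) ∧
        |x.1.maxLabel - (x.2.maxLabel - x.2.minLabel)| ≤ 3 := by
  let F : BT × ℕ → LTree × LTree := fun q => (BT.tree (BT.sig^[q.2 + 1] q.1), BT.tree q.1)
  have hR := BT.all_pos n
  have hc := BT.Om_card n
  have hc' := BT.Om_card' n
  have hOpos : (0 : ℚ) < ((BT.Om n).card : ℚ) := by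
    have : 0 < (BT.Om n).card := by omega
    exact_mod_cast this
  have hsum : ∀ P : LTree × LTree → Prop,
      ∑ x ∈ ((BT.Om n).image F).filter P,
        ((((BT.Om n).filter (fun q => F q = x)).card : ℚ) / ((BT.Om n).card : ℚ))
      = (((BT.Om n).filter (fun q => P (F q))).card : ℚ) / ((BT.Om n).card : ℚ) := by
    intro P
    rw [← Finset.sum_div]
    congr 1
    rw [Finset.card_eq_sum_card_fiberwise (s := (BT.Om n).filter (fun q => P (F q))) (f := F)
      (t := ((BT.Om n).image F).filter P)]
    · push_cast
      apply Finset.sum_congr rfl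
      intro x hx
      rw [Finset.mem_filter] at hx
      congr 2
      ext q
      simp only [Finset.mem_filter]
      constructor
      · rintro ⟨h1, h2⟩; exact ⟨⟨h1, h2 ▸ hx.2⟩, h2⟩
      · rintro ⟨h1, h2⟩; exact ⟨h1.1, h2⟩
    · intro q hq
      simp only [Finset.coe_filter, Set.mem_ofPred_eq] at hq ⊢
      exact ⟨Finset.mem_image_of_mem F hq.1, hq.2⟩
  have hOm : ∀ q ∈ BT.Om n, q.1.size = n ∧ q.2 < n + 2 ∧ BT.Bal (BT.sig^[q.2 + 1] q.1) := by
    intro q hq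
    simp only [BT.Om, Finset.mem_filter, Finset.mem_product, BT.mem_all, Finset.mem_range] at hq
    exact ⟨hq.1.1, hq.1.2, hq.2⟩
  refine ⟨(BT.Om n).image F, fun x =>
    (((BT.Om n).filter (fun q => F q = x)).card : ℚ) / ((BT.Om n).card : ℚ),
    ?_, ?_, ?_, ?_, ?_, ?_⟩
  · intro x hx
    obtain ⟨q, hq, hqx⟩ := Finset.mem_image.1 hx
    apply div_pos _ hOpos
    have : 0 < ((BT.Om n).filter (fun q => F q = x)).card :=
      Finset.card_pos.2 ⟨q, Finset.mem_filter.2 ⟨hq, hqx⟩⟩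
    exact_mod_cast this
  · have := hsum (fun _ => True)
    simp only [Finset.filter_true] at this
    rw [this, div_self hOpos.ne']
  · intro x hx
    obtain ⟨q, hq, rfl⟩ := Finset.mem_image.1 hx
    obtain ⟨h1, h2, h3⟩ := hOm q hq
    refine ⟨(BT.tree_mem_WL _ (by rw [BT.size_iter, h1])).2 h3, ?_⟩
    have := BT.tree_mem q.1
    rwa [h1] at this
  · intro W hW
    obtain ⟨t, h1, h2, rfl⟩ := BT.wl_surj hW
    rw [hsum (fun x => x.1 = BT.tree t), BT.wl_ncard]
    have e : (BT.Om n).filter (fun q => (F q).1 = BT.tree t)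
        = (BT.Om n).filter (fun q => BT.sig^[q.2 + 1] q.1 = t) := by
      apply Finset.filter_congr
      intro q _
      exact ⟨fun h => BT.tree_inj h, fun h => congrArg BT.tree h⟩
    rw [e, BT.Om_fiber_left n t h1 h2, hc']
    push_cast
    have : ((n : ℚ) + 2) ≠ 0 := by positivity
    rw [← div_div, div_self this, one_div]
  · intro U hU
    obtain ⟨t, h1, rfl⟩ := BT.tree_surj hU
    rw [hsum (fun x => x.2 = BT.tree t), BT.emb_ncard]
    have e : (BT.Om n).filter (fun q => (F q).2 = BT.tree t)
        = (BT.Om n).filter (fun q => q.1 = t) := by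
      apply Finset.filter_congr
      intro q _
      exact ⟨fun h => BT.tree_inj h, fun h => congrArg BT.tree h⟩
    rw [e, BT.Om_fiber_right n t h1, hc]
    push_cast
    rw [← div_div, div_self two_ne_zero, one_div]
  · intro x hx
    obtain ⟨q, hq, rfl⟩ := Finset.mem_image.1 hx
    obtain ⟨h1, h2, h3⟩ := hOm q hq
    have H := BT.count_bounds q.1 q.2 (by omega) h3
    refine ⟨fun k hk => ?_, BT.max_bound _ _ (BT.size_iter _ _) h3 H⟩
    simp only [F, BT.countLE_tree]
    exact H k (by exact_mod_cast hk)
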